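/- Let X = Spec(B) be given by a local presentation attached to the multiplicity as in the context, with elimination algebra G_X^{(d)} over S and closed point ξ. Then ord(G_X^{(d)}) equals the minimum, over all field extensions K of k and all arcs φ : B → K[[t]] in X through ξ (with all φ(θ_i) and φ(z_j) nonzero), of the quotient r_{X,φ}/ord(φ). In particular r_{X,φ}/ord(φ) ≥ ord(G_X^{(d)}) for every such arc, and there exists an arc attaining the value ord(G_X^{(d)}), so that the infimum is a minimum (Main Theorem). -/

import Mathlib

open Polynomial
open scoped ENNReal

noncomputable section

namespace NashMult

/-- The `m`-adic order `ν(f)` of an element `f` of a ring: the largest `n` with `f ∈ m ^ n`. -/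
def adicOrder {R : Type*} [CommRing R] (m : Ideal R) (f : R) : ℕ :=
  sSup {n : ℕ | f ∈ m ^ n}

/-- A subalgebra `G ⊆ R[W]` is *graded* if it is spanned by its "monomials", i.e. it is closed
under taking homogeneous components.  This is the condition expressing that `G = ⊕ I_l W^l`
for a family of ideals `I_l` (with `I_0 = R` and `I_i · I_j ⊆ I_{i+j}` automatic). -/
def Graded {R : Type*} [CommRing R] (G : Subalgebra R (Polynomial R)) : Prop :=
  ∀ p ∈ G, ∀ n : ℕ, (C (p.coeff n) * X ^ n : Polynomial R) ∈ G

/-- A *Rees algebra* over `R`: a finitely generated graded subalgebra of `R[W]`. -/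
def IsReesAlgebra {R : Type*} [CommRing R] (G : Subalgebra R (Polynomial R)) : Prop :=
  G.FG ∧ Graded G

/-- The order of (the Rees algebra) `G` at the closed point of the local ring `(R, m)`:
`ord(G) = inf { ν(f)/n : f W^n a homogeneous element of G, n ≥ 1, f ≠ 0 }`
(with value `∞` for the empty infimum). -/
def reesOrder {R : Type*} [CommRing R] (m : Ideal R) (G : Subalgebra R (Polynomial R)) : ℝ≥0∞ :=
  sInf {q : ℝ≥0∞ | ∃ (f : R) (n : ℕ), f ≠ 0 ∧ 1 ≤ n ∧ (C f * X ^ n : Polynomial R) ∈ G ∧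
    q = (adicOrder m f : ℝ≥0∞) / (n : ℝ≥0∞)}

/-- `G = ⊕ I_l W^l` is *differentially closed* relative to a family `D` of derivations if
`I_{l+1} ⊆ I_l` and `D_j (I_l) ⊆ I_{l-1}` for all `l ≥ 1` and all `j`. -/
def DiffClosed {k R ι : Type*} [CommRing k] [CommRing R] [Algebra k R]
    (D : ι → Derivation k R R) (G : Subalgebra R (Polynomial R)) : Prop :=
  (∀ (f : R) (l : ℕ), 1 ≤ l → (C f * X ^ (l + 1) : Polynomial R) ∈ G →
      (C f * X ^ l : Polynomial R) ∈ G) ∧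
  (∀ (f : R) (l : ℕ) (j : ι), (C f * X ^ (l + 1) : Polynomial R) ∈ G →
      (C (D j f) * X ^ l : Polynomial R) ∈ G)

/-- `Diff(M)`: the smallest graded differentially closed subalgebra of `R[W]` containing the
set `M`. -/
def diffClosure {k R ι : Type*} [CommRing k] [CommRing R] [Algebra k R]
    (D : ι → Derivation k R R) (M : Set (Polynomial R)) : Subalgebra R (Polynomial R) :=
  sInf {G : Subalgebra R (Polynomial R) | M ⊆ ↑G ∧ Graded G ∧ DiffClosed D G}

/-- The image `ψ(G)` of a Rees algebra `G` over `R` under a homomorphism (arc) `ψ : R → K⟦t⟧`: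
the Rees algebra over `K⟦t⟧` generated by all `ψ(g) W^l` for `g W^l` a homogeneous element of
`G` with `ψ(g) ≠ 0`. -/
def arcImage {R A : Type*} [CommRing R] [CommRing A] (ψ : R → A)
    (G : Subalgebra R (Polynomial R)) : Subalgebra A (Polynomial A) :=
  Algebra.adjoin A {p : Polynomial A | ∃ (g : R) (l : ℕ),
    (C g * X ^ l : Polynomial R) ∈ G ∧ ψ g ≠ 0 ∧ p = C (ψ g) * X ^ l}

/-- The order `ord(ψ)` of an arc `ψ : R → K⟦t⟧`: the largest `n` such that
`ψ(m) ⊆ t^n` (`t` being the ideal `tI`). -/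
def homOrd {R A : Type*} [CommRing R] [CommRing A] (m : Ideal R) (tI : Ideal A)
    (ψ : R → A) : ℕ :=
  sSup {n : ℕ | ∀ s ∈ m, ψ s ∈ tI ^ n}

/-- The maximal ideal `(t)` of `K⟦t⟧`. -/
def tId (K : Type*) [CommRing K] : Ideal (PowerSeries K) :=
  Ideal.span {(PowerSeries.X : PowerSeries K)}

/-- The `t`-adic order on `K⟦t⟧`. -/
def tOrd {K : Type*} [CommRing K] (g : PowerSeries K) : ℕ :=
  adicOrder (tId K) g

/-- The family of ideals `I_l` of the graded algebra `G = ⊕ I_l W^l`. -/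
def idealFam {R : Type*} [CommRing R] (G : Subalgebra R (Polynomial R)) (l : ℕ) : Ideal R :=
  Submodule.comap (Polynomial.monomial l : R →ₗ[R] Polynomial R) (Subalgebra.toSubmodule G)

/-- The closed point of the local ring `(R, m)` belongs to the singular locus of
`G = ⊕ I_l W^l`, i.e. `ν(I_l) ≥ l` for all `l ≥ 1`. -/
def SingFam {R : Type*} [CommRing R] (m : Ideal R) (I : ℕ → Ideal R) : Prop :=
  ∀ l : ℕ, 1 ≤ l → I l ≤ m ^ l

/-- The transform `⊕ (I_l · T^{-l}) W^l` of a Rees algebra `⊕ I_l W^l` over a DVR with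
uniformizer `T` (when the closed point lies in the singular locus, `I_l ⊆ (T^l)` and
`I_l · T^{-l} = (I_l : (T^l))`). -/
def transformFam {R : Type*} [CommRing R] (T : R) (I : ℕ → Ideal R) : ℕ → Ideal R :=
  fun l => (I l).colon (Ideal.span {T ^ l})

/-- The persistance: the least number `κ` of transforms needed so that the closed point no
longer lies in the singular locus. -/
def persist {R : Type*} [CommRing R] (m : Ideal R) (T : R)
    (G : Subalgebra R (Polynomial R)) : ℕ :=
  sInf {κ : ℕ | ¬ SingFam m ((transformFam T)^[κ] (idealFam G))}

/-- The set of elements of a ring integral over a subset `s` (monic equation with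
coefficients in `s`). -/
def intClos {A : Type*} [CommRing A] (s : Set A) : Set A :=
  {p : A | ∃ q : Polynomial A, q.Monic ∧ (∀ n, q.coeff n ∈ s) ∧ Polynomial.eval p q = 0}


/-- The monic polynomial `f = x^b + B_{b-2} x^{b-2} + ⋯ + B_1 x + B_0` with coefficients
`B_j = Bc j` (only `j ≤ b - 2` is relevant). -/
def minPolyOf {S : Type*} [CommRing S] (b : ℕ) (Bc : ℕ → S) : Polynomial S :=
  Polynomial.X ^ b + ∑ j ∈ Finset.range (b - 1), Polynomial.C (Bc j) * Polynomial.X ^ j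


/-- The maximal ideal `(z_1, …, z_d)` of the polynomial ring `k[z_1, …, z_d]`
(the kernel of evaluation at the origin). -/
def mPoly (k : Type) [Field k] (d : ℕ) : Ideal (MvPolynomial (Fin d) k) :=
  RingHom.ker (MvPolynomial.aeval (fun _ => (0 : k)) : MvPolynomial (Fin d) k →ₐ[k] k)

instance {k : Type} [Field k] {d : ℕ} : (mPoly k d).IsMaximal :=
  RingHom.ker_isMaximal_of_surjective _ (fun a => ⟨MvPolynomial.C a, by simp⟩)

instance {k : Type} [Field k] {d : ℕ} : (mPoly k d).IsPrime :=
  (inferInstance : (mPoly k d).IsMaximal).isPrime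

/-- `IsSLoc k d S` says that `S` is (identified with) the localization of `k[z_1, …, z_d]`
at the maximal ideal `(z_1, …, z_d)`. -/
abbrev IsSLoc (k : Type) [Field k] (d : ℕ) (S : Type) [CommRing S]
    [Algebra (MvPolynomial (Fin d) k) S] : Prop :=
  IsLocalization.AtPrime S (mPoly k d)

/-- The element `z_j` of `S`. -/
def zvar (k : Type) [Field k] (d : ℕ) (S : Type) [CommRing S]
    [Algebra (MvPolynomial (Fin d) k) S] (j : Fin d) : S :=
  algebraMap (MvPolynomial (Fin d) k) S (MvPolynomial.X j)

/-- The maximal ideal `m = (z_1, …, z_d)` of the local ring `S`. -/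
def mS (k : Type) [Field k] (d : ℕ) (S : Type) [CommRing S]
    [Algebra (MvPolynomial (Fin d) k) S] : Ideal S :=
  (mPoly k d).map (algebraMap (MvPolynomial (Fin d) k) S)


variable (k : Type) [Field k] (d : ℕ)
variable (S : Type) [CommRing S] [Algebra (MvPolynomial (Fin d) k) S] [Algebra k S]

/-- A local presentation, attached to the multiplicity, of a `d`-dimensional variety
`X = Spec B` at the closed point `ξ`:  `B = S[x_1,…,x_{n-d}]/I` with `I` prime,
`S → B` injective and finite, and the minimal polynomial over `Frac S` of the class `θ_i`
of `x_i` is `f_i = x_i^{b_i} + B_{i,b_i-2} x_i^{b_i-2} + ⋯ + B_{i,0}` with `b_i ≥ 2`,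
`B_{i,j} ∈ m^{b_i - j}`, and some `B_{i,j} ≠ 0`. -/
structure Presentation [IsDomain S] : Type 1 where
  /-- the number `n - d ≥ 1` of extra variables `x_i` -/
  e : ℕ
  he : 1 ≤ e
  /-- the prime ideal `I ⊆ S[x_1,…,x_{n-d}]` defining `X` -/
  I : Ideal (MvPolynomial (Fin e) S)
  hprime : I.IsPrime
  hinj : Function.Injective (algebraMap S (MvPolynomial (Fin e) S ⧸ I))
  hfinite : Module.Finite S (MvPolynomial (Fin e) S ⧸ I)
  /-- the degrees `b_i ≥ 2` -/
  b : Fin e → ℕ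
  hb : ∀ i, 2 ≤ b i
  /-- the coefficients `B_{i,j}` (only `j ≤ b_i - 2` is relevant) -/
  Bc : Fin e → ℕ → S
  /-- `f_i(θ_i) = 0` -/
  hroot : ∀ i, Polynomial.aeval (Ideal.Quotient.mk I (MvPolynomial.X i))
    (minPolyOf (b i) (Bc i)) = 0
  /-- `f_i` is irreducible over `Frac S`, i.e. it is the minimal polynomial of `θ_i` -/
  hirr : ∀ i, Irreducible ((minPolyOf (b i) (Bc i)).map (algebraMap S (FractionRing S)))
  /-- `B_{i,j} ∈ m^{b_i - j}` -/
  hmem : ∀ i, ∀ j ≤ b i - 2, Bc i j ∈ (mS k d S) ^ (b i - j)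
  /-- some `B_{i,j} ≠ 0` -/
  hnz : ∃ i, ∃ j ≤ b i - 2, Bc i j ≠ 0

variable [IsDomain S]
variable {k d S}

/-- The coordinate ring `B = S[x_1,…,x_{n-d}]/I` of `X`. -/
abbrev BRing (P : Presentation k d S) : Type :=
  MvPolynomial (Fin P.e) S ⧸ P.I

/-- The class `θ_i` of `x_i` in `B`. -/
def theta (P : Presentation k d S) (i : Fin P.e) : BRing P :=
  Ideal.Quotient.mk P.I (MvPolynomial.X i)

/-- The elimination algebra in dimension `d`:
`G_X^{(d)} = Diff( S[ B_{i,j} W^{b_i - j} : i, j ] )`, a Rees algebra over `S`. -/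
def elimAlg (P : Presentation k d S) (D : Fin d → Derivation k S S) :
    Subalgebra S (Polynomial S) :=
  diffClosure D {p : Polynomial S | ∃ i, ∃ j ≤ P.b i - 2,
    p = Polynomial.C (P.Bc i j) * Polynomial.X ^ (P.b i - j)}

/-- An arc in `X` through `ξ` (with the required nonvanishing): a `k`-algebra homomorphism
`φ : B → K⟦t⟧` sending the maximal ideal of `B` at `ξ` into `(t)`, with all `φ(θ_i)` and
`φ(z_j)` nonzero. -/
def IsArc (P : Presentation k d S) {K : Type} [Field K] [Algebra k K]
    (φ : BRing P →ₐ[k] PowerSeries K) : Prop :=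
  (∀ s ∈ mS k d S, φ (algebraMap S (BRing P) s) ∈ tId K) ∧
  (∀ i, φ (theta P i) ∈ tId K) ∧
  (∀ i, φ (theta P i) ≠ 0) ∧
  (∀ j, φ (algebraMap S (BRing P) (zvar k d S j)) ≠ 0)

/-- The order of an arc: the minimum of the `t`-adic orders of the `φ(θ_i)` and the
`φ(z_j)`. -/
def arcOrd (P : Presentation k d S) {K : Type} [Field K] [Algebra k K]
    (φ : BRing P →ₐ[k] PowerSeries K) : ℕ :=
  sInf ((Set.range fun i => tOrd (φ (theta P i))) ∪
    (Set.range fun j => tOrd (φ (algebraMap S (BRing P) (zvar k d S j)))))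

/-- The contact algebra `G^{(1)}_{X_0,φ}`: the Rees algebra over `K⟦t⟧` generated by the
`φ(θ_i) W` together with all `φ(g) W^l` for `g W^l` a homogeneous element of `G_X^{(d)}`
with `φ(g) ≠ 0`. -/
def contactAlg (P : Presentation k d S) (D : Fin d → Derivation k S S)
    {K : Type} [Field K] [Algebra k K] (φ : BRing P →ₐ[k] PowerSeries K) :
    Subalgebra (PowerSeries K) (Polynomial (PowerSeries K)) :=
  Algebra.adjoin (PowerSeries K)
    ((Set.range fun i => (Polynomial.C (φ (theta P i)) * Polynomial.X :
        Polynomial (PowerSeries K))) ∪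
      {p : Polynomial (PowerSeries K) | ∃ (g : S) (l : ℕ),
        (Polynomial.C g * Polynomial.X ^ l : Polynomial S) ∈ elimAlg P D ∧
        φ (algebraMap S (BRing P) g) ≠ 0 ∧
        p = Polynomial.C (φ (algebraMap S (BRing P) g)) * Polynomial.X ^ l})

/-- The order of contact `r_{X,φ}` of the arc `φ` with `Max mult(X)`: the order of the
contact algebra at the closed point of `K⟦t⟧`. -/
def rOrd (P : Presentation k d S) (D : Fin d → Derivation k S S)
    {K : Type} [Field K] [Algebra k K] (φ : BRing P →ₐ[k] PowerSeries K) : ℝ≥0∞ :=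
  reesOrder (tId K) (contactAlg P D φ)

/-- The persistance `ρ_{X,φ}`: the least number of transforms of the contact algebra
(i.e. of point blow-ups directed by `φ`) needed to make the closed point leave the
singular locus, that is, to lower the Nash multiplicity. -/
def rho (P : Presentation k d S) (D : Fin d → Derivation k S S)
    {K : Type} [Field K] [Algebra k K] (φ : BRing P →ₐ[k] PowerSeries K) : ℕ :=
  persist (tId K) (PowerSeries.X : PowerSeries K) (contactAlg P D φ)

/-!
For `q ≥ 1`, the elements `∑ f_l W^l` with `ν(f_l) ≥ q l` form a graded, differentially closed
subalgebra of `S[W]`. For `q` the least slope `ν(B_{i,j}) / (b_i - j)` it contains all generators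
of `G_X^{(d)}`, hence `ord G_X^{(d)} = q`.

If an arc `φ` sends every `z_j` into `(t ^ N)`, then `φ(B_{i,j})` has order at least
`q N (b_i - j)`, and the integral equation of `θ_i` forces `φ(θ_i)` to have order at least `q N`.
So the whole contact algebra has slope at least `q N`; with `N = ord φ` this is the lower bound.

For equality, take `K` algebraically closed and a line `t ↦ t a` in affine `d`-space with `a`
outside the zeros of the initial forms of the relevant `B_{i,j}`: it gives a map `S → K⟦t⟧` which
preserves their orders. It lifts to `B` after composition with an injective endomorphism of
`K⟦t⟧`, which multiplies all orders by the same integer: a component of the base change of `B` is a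
finite domain over `K⟦t⟧`, and its normalization localized at a maximal ideal is a discrete
valuation ring with residue field `K`, which embeds in the power series in a uniformizer.
-/

open scoped NNReal PowerSeries

section Orders

variable {R : Type*} [CommRing R] {m : Ideal R} {f : R} {n : ℕ}

theorem mem_pow_adicOrder (m : Ideal R) (f : R) : f ∈ m ^ adicOrder m f := by
  by_cases hb : BddAbove {n | f ∈ m ^ n}
  · exact Nat.sSup_mem ⟨0, by simp⟩ hb
  · simp [adicOrder, Nat.sSup_of_not_bddAbove hb]

theorem mem_pow_of_le_adicOrder (h : n ≤ adicOrder m f) : f ∈ m ^ n :=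
  Ideal.pow_le_pow_right h (mem_pow_adicOrder m f)

theorem le_adicOrder_iff [IsNoetherianRing R] [IsDomain R] (hm : m ≠ ⊤) (hf : f ≠ 0) :
    n ≤ adicOrder m f ↔ f ∈ m ^ n := by
  refine ⟨mem_pow_of_le_adicOrder, fun h => le_csSup ?_ h⟩
  have krull := Ideal.iInf_pow_eq_bot_of_isDomain m hm
  obtain ⟨N, hN⟩ : ∃ N, f ∉ m ^ N := by
    by_contra! hmem
    exact hf (Ideal.mem_bot.mp (krull ▸ Ideal.mem_iInf.mpr hmem))
  exact ⟨N, fun l hl => le_of_not_gt fun h => hN (Ideal.pow_le_pow_right h.le hl)⟩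

theorem derivation_mem_pow {A : Type*} [CommRing A] [Algebra A R] (D : Derivation A R R)
    (hf : f ∈ m ^ (n + 1)) : D f ∈ m ^ n := by
  induction n generalizing f with
  | zero => simp
  | succ n ih =>
    rw [pow_succ] at hf
    refine Submodule.mul_induction_on hf (fun a ha b hb => ?_) fun a b ha hb => ?_
    · rw [D.leibniz, smul_eq_mul, smul_eq_mul]
      exact add_mem (Ideal.mul_mem_right _ _ ha)
        (pow_succ' m n ▸ Ideal.mul_mem_mul hb (ih ha))
    · rw [map_add]
      exact add_mem ha hb

end Orders

section SlopeAlgebra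

variable {R : Type*} [CommRing R] {m : Ideal R} {q : ℝ≥0} {f : R} {n : ℕ}

/-- The graded algebra `⊕ m ^ ⌈q l⌉ W ^ l`. A Rees algebra has order at least `q` when it is
contained in this one, which turns bounds on `reesOrder` into membership of generators. -/
def slopeAlgebra (m : Ideal R) (q : ℝ≥0) : Subalgebra R R[X] where
  carrier := {p | ∀ n : ℕ, p.coeff n ∈ m ^ ⌈q * n⌉₊}
  add_mem' hp hr n := by
    rw [coeff_add]
    exact add_mem (hp n) (hr n)
  mul_mem' {p r} hp hr n := by
    rw [coeff_mul]
    refine sum_mem fun ij hij => Ideal.pow_le_pow_right ?_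
      (pow_add m _ _ ▸ Ideal.mul_mem_mul (hp ij.1) (hr ij.2))
    rw [← Finset.HasAntidiagonal.mem_antidiagonal.mp hij, Nat.cast_add, mul_add]
    exact Nat.ceil_add_le _ _
  algebraMap_mem' r n := by
    rcases eq_or_ne n 0 with rfl | hn
    · simp
    · simp [coeff_C_of_ne_zero hn]

theorem C_mul_X_pow_mem_slopeAlgebra :
    (C f * X ^ n : R[X]) ∈ slopeAlgebra m q ↔ f ∈ m ^ ⌈q * n⌉₊ := by
  refine ⟨fun h => by simpa using h n, fun h l => ?_⟩
  rw [coeff_C_mul_X_pow]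
  split_ifs with hl
  · exact hl ▸ h
  · exact zero_mem _

theorem graded_slopeAlgebra : Graded (slopeAlgebra m q) :=
  fun _ hp n => C_mul_X_pow_mem_slopeAlgebra.mpr (hp n)

theorem mem_pow_of_le_reesOrder {G : Subalgebra R R[X]} (hq : q ≤ reesOrder m G)
    (hf : (C f * X ^ n : R[X]) ∈ G) : f ∈ m ^ ⌈q * n⌉₊ := by
  rcases eq_or_ne f 0 with rfl | hf0
  · exact zero_mem _
  rcases Nat.eq_zero_or_pos n with rfl | hn
  · simp
  have hle : (q : ℝ≥0∞) ≤ adicOrder m f / n := hq.trans (sInf_le ⟨f, n, hf0, hn, hf, rfl⟩)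
  rw [ENNReal.le_div_iff_mul_le (by simp [hn.ne']) (by simp)] at hle
  exact mem_pow_of_le_adicOrder (Nat.ceil_le.mpr (by exact_mod_cast hle))

theorem le_reesOrder [IsNoetherianRing R] [IsDomain R] (hm : m ≠ ⊤) {G : Subalgebra R R[X]}
    (hG : G ≤ slopeAlgebra m q) : q ≤ reesOrder m G := by
  refine le_sInf ?_
  rintro _ ⟨f, n, hf0, hn, hf, rfl⟩
  have hν := (le_adicOrder_iff hm hf0).mpr (C_mul_X_pow_mem_slopeAlgebra.mp (hG hf))
  rw [ENNReal.le_div_iff_mul_le (.inl (Nat.cast_ne_zero.mpr (by lia))) (by simp)]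
  exact_mod_cast Nat.ceil_le.mp hν

section DiffClosure

variable {A ι : Type*} [CommRing A] [Algebra A R] {D : ι → Derivation A R R} {M : Set R[X]}

theorem diffClosed_slopeAlgebra (hq : 1 ≤ q) : DiffClosed D (slopeAlgebra m q) := by
  have ceil_succ_le (l : ℕ) : ⌈q * l⌉₊ + 1 ≤ ⌈q * (l + 1 : ℕ)⌉₊ := by
    rw [← Nat.ceil_add_one (by positivity), Nat.cast_succ, mul_add, mul_one]
    gcongr
  refine ⟨fun f l _ h => ?_, fun f l j h => ?_⟩ <;>
    rw [C_mul_X_pow_mem_slopeAlgebra] at h ⊢ <;>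
    replace h := Ideal.pow_le_pow_right (ceil_succ_le l) h
  · exact Ideal.pow_le_pow_right (Nat.le_succ _) h
  · exact derivation_mem_pow _ h

theorem diffClosure_le_slopeAlgebra (hq : 1 ≤ q) (hM : M ⊆ slopeAlgebra m q) :
    diffClosure D M ≤ slopeAlgebra m q :=
  sInf_le ⟨hM, graded_slopeAlgebra, diffClosed_slopeAlgebra hq⟩

theorem subset_diffClosure : M ⊆ diffClosure D M := by
  intro p hp
  simp only [diffClosure, SetLike.mem_coe, Algebra.mem_sInf]
  exact fun G hG => hG.1 hp

theorem reesOrder_diffClosure_eq [IsNoetherianRing R] [IsDomain R] (hm : m ≠ ⊤) (hq : 1 ≤ q)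
    (hM : M ⊆ slopeAlgebra m q) (hf : f ≠ 0) (hn : 1 ≤ n) (hfM : C f * X ^ n ∈ M)
    (hqf : (q : ℝ≥0∞) = adicOrder m f / n) : reesOrder m (diffClosure D M) = q :=
  le_antisymm (sInf_le ⟨f, n, hf, hn, subset_diffClosure hfM, hqf⟩)
    (le_reesOrder hm (diffClosure_le_slopeAlgebra hq hM))

end DiffClosure

end SlopeAlgebra

section PowerSeriesOrder

variable {K : Type*} [Field K] {f : K⟦X⟧} {n : ℕ}

theorem mem_tId_pow_iff : f ∈ tId K ^ n ↔ (n : ℕ∞) ≤ f.order := by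
  rw [tId, Ideal.span_singleton_pow, Ideal.mem_span_singleton, PowerSeries.X_pow_dvd_iff]
  exact ⟨PowerSeries.nat_le_order f n, fun h l hl =>
    PowerSeries.coeff_of_lt_order l (lt_of_lt_of_le (by exact_mod_cast hl) h)⟩

theorem tId_ne_top : tId K ≠ ⊤ := by
  rw [tId, ← PowerSeries.maximalIdeal_eq_span_X]
  exact Ideal.IsPrime.ne_top'

theorem le_tOrd_iff (hf : f ≠ 0) : n ≤ tOrd f ↔ f ∈ tId K ^ n :=
  le_adicOrder_iff tId_ne_top hf

theorem order_eq_tOrd (hf : f ≠ 0) : f.order = tOrd f := by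
  refine ENat.eq_of_forall_natCast_le_iff fun n => ?_
  rw [← mem_tId_pow_iff, Nat.cast_le, le_tOrd_iff hf]

theorem ne_zero_of_order_eq_natCast (h : f.order = n) : f ≠ 0 := by
  rintro rfl
  exact ENat.top_ne_natCast n (PowerSeries.order_zero.symm.trans h)

theorem mem_tId_pow_of_isRoot {p : K⟦X⟧[X]} (hp : p.Monic) {θ : K⟦X⟧} (hθ : p.IsRoot θ)
    {q : ℝ≥0} (hcoeff : ∀ j < p.natDegree, p.coeff j ∈ tId K ^ ⌈q * (p.natDegree - j : ℕ)⌉₊) :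
    θ ∈ tId K ^ ⌈q⌉₊ := by
  by_contra hcon
  have hθ0 : θ ≠ 0 := fun h => hcon (h ▸ zero_mem _)
  have hlt : (tOrd θ : ℝ≥0) < q :=
    not_le.mp fun h => hcon (mem_pow_of_le_adicOrder (Nat.ceil_le.mpr h))
  have hterm : ∀ j ∈ Finset.range p.natDegree,
      p.coeff j * θ ^ j ∈ tId K ^ (tOrd θ * p.natDegree + 1) := by
    intro j hj
    obtain ⟨l, hl⟩ := Nat.exists_eq_add_of_lt (Finset.mem_range.mp hj)
    have hsub : p.natDegree - j = l + 1 := by lia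
    have hceil : tOrd θ * (l + 1) < ⌈q * (l + 1 : ℕ)⌉₊ := by
      rw [Nat.lt_ceil]
      push_cast
      gcongr
    refine Ideal.pow_le_pow_right ?_ (pow_add (tId K) _ (tOrd θ * j) ▸ Ideal.mul_mem_mul
      (hcoeff j (Finset.mem_range.mp hj))
      (pow_mul (tId K) _ j ▸ Ideal.pow_mem_pow (mem_pow_adicOrder _ θ) j))
    rw [hsub, hl]
    linarith
  have hpow : θ ^ p.natDegree ∈ tId K ^ (tOrd θ * p.natDegree + 1) := by
    have hsum : θ ^ p.natDegree + ∑ j ∈ Finset.range p.natDegree, p.coeff j * θ ^ j = 0 := by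
      have heval := congrArg (eval θ) hp.as_sum
      rw [hθ] at heval
      simpa [eval_finsetSum] using heval.symm
    rw [eq_neg_of_add_eq_zero_left hsum]
    exact neg_mem (sum_mem hterm)
  rw [mem_tId_pow_iff, PowerSeries.order_pow, order_eq_tOrd hθ0, nsmul_eq_mul,
    mul_comm (tOrd θ)] at hpow
  exact Nat.not_succ_le_self _ (by exact_mod_cast hpow)

end PowerSeriesOrder

section LocalRing

theorem mPoly_eq_idealOfVars (k : Type) [Field k] (d : ℕ) :
    mPoly k d = MvPolynomial.idealOfVars (Fin d) k := by
  ext p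
  rw [← pow_one (MvPolynomial.idealOfVars _ _), MvPolynomial.mem_pow_idealOfVars_iff']
  simp [mPoly, MvPolynomial.aeval_zero', MvPolynomial.constantCoeff_eq, RingHom.mem_ker,
    Finsupp.degree_eq_zero_iff]

variable {k : Type} [Field k] {d : ℕ} {S : Type} [CommRing S] [Algebra (MvPolynomial (Fin d) k) S]

theorem zvar_mem_mS (j : Fin d) : zvar k d S j ∈ mS k d S :=
  Ideal.mem_map_of_mem _ (by simp [mPoly, RingHom.mem_ker])

theorem mS_eq_span : mS k d S = Ideal.span (Set.range (zvar k d S)) := by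
  rw [mS, mPoly_eq_idealOfVars, MvPolynomial.idealOfVars, Ideal.map_span, ← Set.range_comp]
  rfl

theorem mS_ne_top [IsSLoc k d S] : mS k d S ≠ ⊤ := by
  have := IsLocalization.AtPrime.isLocalRing S (mPoly k d)
  rw [mS, IsLocalization.AtPrime.map_eq_maximalIdeal (mPoly k d) S]
  exact Ideal.IsPrime.ne_top'

theorem isNoetherianRing_of_isSLoc (k : Type) [Field k] (d : ℕ) (S : Type) [CommRing S]
    [Algebra (MvPolynomial (Fin d) k) S] [IsSLoc k d S] : IsNoetherianRing S :=
  IsLocalization.isNoetherianRing (mPoly k d).primeCompl S inferInstance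

theorem map_mem_pow {A : Type*} [CommRing A] {J : Ideal A} {f : S →+* A}
    (hf : ∀ j, f (zvar k d S j) ∈ J) {n : ℕ} {s : S} (hs : s ∈ mS k d S ^ n) : f s ∈ J ^ n := by
  have hm : mS k d S ≤ J.comap f := by
    rw [mS_eq_span, Ideal.span_le]
    exact Set.range_subset_iff.mpr hf
  exact Ideal.le_comap_pow f n (Ideal.pow_right_mono hm n hs)

theorem map_mem_pow_ceil {A : Type*} [CommRing A] {J : Ideal A} {f : S →+* A} {N : ℕ}
    (hf : ∀ j, f (zvar k d S j) ∈ J ^ N) {q : ℝ≥0} {n : ℕ} {s : S}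
    (hs : s ∈ mS k d S ^ ⌈q * n⌉₊) : f s ∈ J ^ ⌈q * N * n⌉₊ := by
  refine Ideal.pow_le_pow_right (Nat.ceil_le.mpr ?_) (pow_mul J N _ ▸ map_mem_pow hf hs)
  rw [mul_right_comm, mul_comm, Nat.cast_mul]
  gcongr
  exact Nat.le_ceil _

end LocalRing

section MinPoly

variable {R : Type*} [CommRing R] {b : ℕ} {c : ℕ → R}

theorem coeff_minPolyOf {j : ℕ} (hj : j < b) :
    (minPolyOf b c).coeff j = if j < b - 1 then c j else 0 := by
  simp [minPolyOf, coeff_X_pow, hj.ne]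

theorem degree_sum_range_C_mul_X_pow_lt (c : ℕ → R) (hb : 1 ≤ b) :
    (∑ j ∈ Finset.range (b - 1), C (c j) * X ^ j : R[X]).degree < b := by
  rw [degree_lt_iff_coeff_zero]
  intro l hl
  simp only [finsetSum_coeff, coeff_C_mul_X_pow]
  refine Finset.sum_eq_zero fun j hj => if_neg ?_
  have := Finset.mem_range.mp hj
  lia

theorem monic_minPolyOf (c : ℕ → R) (hb : 1 ≤ b) : (minPolyOf b c).Monic :=
  monic_X_pow_add (degree_sum_range_C_mul_X_pow_lt c hb)

theorem natDegree_minPolyOf [Nontrivial R] (c : ℕ → R) (hb : 1 ≤ b) :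
    (minPolyOf b c).natDegree = b := by
  have h := degree_sum_range_C_mul_X_pow_lt c hb
  rw [← degree_X_pow (R := R) b] at h
  rw [minPolyOf, natDegree_add_eq_left_of_degree_lt h, natDegree_X_pow]

end MinPoly

section Presentation

variable {k : Type} [Field k] {d : ℕ}
variable {S : Type} [CommRing S] [IsDomain S] [Algebra (MvPolynomial (Fin d) k) S]

theorem sub_pos_of_le_b_sub_two (P : Presentation k d S) {i : Fin P.e} {j : ℕ}
    (hj : j ≤ P.b i - 2) : 0 < P.b i - j := by
  have := P.hb i
  lia

theorem Bc_zero_ne_zero (P : Presentation k d S) (i : Fin P.e) : P.Bc i 0 ≠ 0 := by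
  intro hzero
  have hb := P.hb i
  have hroot : ((minPolyOf (P.b i) (P.Bc i)).map (algebraMap S (FractionRing S))).IsRoot 0 := by
    rw [IsRoot, ← coeff_zero_eq_eval_zero, coeff_map, coeff_minPolyOf (by lia), hzero, ite_self,
      map_zero]
  have hdeg := degree_eq_one_of_irreducible_of_root (P.hirr i) hroot
  have hmonic := monic_minPolyOf (P.Bc i) (one_le_two.trans hb)
  rw [hmonic.degree_map, degree_eq_natDegree hmonic.ne_zero,
    natDegree_minPolyOf _ (one_le_two.trans hb)] at hdeg
  exact absurd hdeg (by norm_cast; lia)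

theorem exists_forall_div_le (P : Presentation k d S) :
    ∃ i, ∃ j ≤ P.b i - 2, P.Bc i j ≠ 0 ∧ ∀ i', ∀ j' ≤ P.b i' - 2, P.Bc i' j' ≠ 0 →
      (adicOrder (mS k d S) (P.Bc i j) : ℝ≥0) / (P.b i - j : ℕ) ≤
        adicOrder (mS k d S) (P.Bc i' j') / (P.b i' - j' : ℕ) := by
  classical
  let T : Finset (Σ _ : Fin P.e, ℕ) :=
    (Finset.univ.sigma fun i => Finset.Iic (P.b i - 2)).filter fun ij => P.Bc ij.1 ij.2 ≠ 0
  have hT : T.Nonempty := by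
    obtain ⟨i, j, hj, hne⟩ := P.hnz
    exact ⟨⟨i, j⟩, by simp [T, hj, hne]⟩
  obtain ⟨⟨i, j⟩, hij, hmin⟩ := T.exists_min_image
    (fun ij => (adicOrder (mS k d S) (P.Bc ij.1 ij.2) : ℝ≥0) / (P.b ij.1 - ij.2 : ℕ)) hT
  simp only [T, Finset.mem_filter, Finset.mem_sigma, Finset.mem_univ, true_and,
    Finset.mem_Iic, and_imp, Sigma.forall] at hij hmin
  exact ⟨i, j, hij.1, hij.2, hmin⟩

end Presentation

section EliminationAlgebra

theorem C_mul_X_pow_mem_elimAlg (P : Presentation k d S) (D : Fin d → Derivation k S S)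
    {i : Fin P.e} {j : ℕ} (hj : j ≤ P.b i - 2) :
    (C (P.Bc i j) * X ^ (P.b i - j) : S[X]) ∈ elimAlg P D :=
  subset_diffClosure ⟨i, j, hj, rfl⟩

theorem exists_reesOrder_elimAlg_eq [IsSLoc k d S] (P : Presentation k d S)
    (D : Fin d → Derivation k S S) :
    ∃ i, ∃ j ≤ P.b i - 2, P.Bc i j ≠ 0 ∧ reesOrder (mS k d S) (elimAlg P D) =
      adicOrder (mS k d S) (P.Bc i j) / (P.b i - j : ℕ) := by
  have := isNoetherianRing_of_isSLoc k d S
  obtain ⟨i, j, hj, hne, hmin⟩ := exists_forall_div_le P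
  refine ⟨i, j, hj, hne, ?_⟩
  have hpos := sub_pos_of_le_b_sub_two P hj
  set q : ℝ≥0 := adicOrder (mS k d S) (P.Bc i j) / (P.b i - j : ℕ) with hq
  have hq' : (q : ℝ≥0∞) = adicOrder (mS k d S) (P.Bc i j) / (P.b i - j : ℕ) := by
    rw [hq, ENNReal.coe_div (Nat.cast_ne_zero.mpr hpos.ne')]
    rfl
  have one_le_q : 1 ≤ q := by
    rw [hq, one_le_div₀ (by exact_mod_cast hpos), Nat.cast_le, le_adicOrder_iff mS_ne_top hne]
    exact P.hmem i j hj
  rw [← hq']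
  refine reesOrder_diffClosure_eq mS_ne_top one_le_q ?_ hne hpos ⟨i, j, hj, rfl⟩ hq'
  rintro _ ⟨i', j', hj', rfl⟩
  refine C_mul_X_pow_mem_slopeAlgebra.mpr ?_
  rcases eq_or_ne (P.Bc i' j') 0 with hzero | hne'
  · exact hzero ▸ zero_mem _
  · have hle := hmin i' j' hj' hne'
    rw [le_div_iff₀ (by exact_mod_cast sub_pos_of_le_b_sub_two P hj')] at hle
    exact mem_pow_of_le_adicOrder (Nat.ceil_le.mpr hle)

end EliminationAlgebra

section Contact

variable {P : Presentation k d S} {K : Type} [Field K] [Algebra k K] {φ : BRing P →ₐ[k] K⟦X⟧}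

theorem isRoot_map_theta (φ : BRing P →ₐ[k] K⟦X⟧) (i : Fin P.e) :
    ((minPolyOf (P.b i) (P.Bc i)).map
      ((φ : BRing P →+* K⟦X⟧).comp (algebraMap S (BRing P)))).IsRoot (φ (theta P i)) := by
  rw [IsRoot, ← Polynomial.map_map, ← RingHom.coe_coe φ, eval_map_apply, eval_map_algebraMap]
  exact (congrArg φ (P.hroot i)).trans (map_zero φ)

theorem map_theta_ne_zero {i : Fin P.e} (h : φ (algebraMap S (BRing P) (P.Bc i 0)) ≠ 0) :
    φ (theta P i) ≠ 0 := by
  intro hzero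
  have hb := P.hb i
  have hroot := isRoot_map_theta φ i
  rw [hzero, IsRoot, ← coeff_zero_eq_eval_zero, coeff_map, coeff_minPolyOf (by lia),
    if_pos (by lia)] at hroot
  exact h hroot

theorem map_theta_mem_tId_pow {q : ℝ≥0} {N : ℕ}
    (hφ : ∀ j, φ (algebraMap S (BRing P) (zvar k d S j)) ∈ tId K ^ N) {i : Fin P.e}
    (hq : ∀ j ≤ P.b i - 2, P.Bc i j ∈ mS k d S ^ ⌈q * (P.b i - j : ℕ)⌉₊) :
    φ (theta P i) ∈ tId K ^ ⌈q * N⌉₊ := by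
  have one_le_b : 1 ≤ P.b i := one_le_two.trans (P.hb i)
  have hmonic := monic_minPolyOf (P.Bc i) one_le_b
  refine mem_tId_pow_of_isRoot (hmonic.map _) (isRoot_map_theta φ i) fun j hj => ?_
  rw [hmonic.natDegree_map, natDegree_minPolyOf _ one_le_b] at hj ⊢
  rw [coeff_map, coeff_minPolyOf hj]
  split_ifs with hlt
  · exact map_mem_pow_ceil hφ (hq j (by lia))
  · simp only [map_zero, zero_mem]

theorem map_theta_mem_tId_pow_of_zvar {N : ℕ}
    (hφ : ∀ j, φ (algebraMap S (BRing P) (zvar k d S j)) ∈ tId K ^ N) (i : Fin P.e) :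
    φ (theta P i) ∈ tId K ^ N := by
  simpa using map_theta_mem_tId_pow (q := 1) hφ fun j hj => by simpa using P.hmem i j hj

theorem contactAlg_le_slopeAlgebra {D : Fin d → Derivation k S S} {q : ℝ≥0} {N : ℕ}
    (hφ : ∀ j, φ (algebraMap S (BRing P) (zvar k d S j)) ∈ tId K ^ N)
    (hq : q ≤ reesOrder (mS k d S) (elimAlg P D)) :
    contactAlg P D φ ≤ slopeAlgebra (tId K) (q * N) := by
  refine Algebra.adjoin_le ?_
  rintro _ (⟨i, rfl⟩ | ⟨g, l, hg, -, rfl⟩)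
  · have hθ := map_theta_mem_tId_pow hφ fun j hj =>
      mem_pow_of_le_reesOrder hq (C_mul_X_pow_mem_elimAlg P D (i := i) hj)
    simpa using C_mul_X_pow_mem_slopeAlgebra (n := 1).mpr (by simpa using hθ)
  · exact C_mul_X_pow_mem_slopeAlgebra.mpr
      (map_mem_pow_ceil (f := (φ : BRing P →+* K⟦X⟧).comp (algebraMap S (BRing P))) hφ
        (mem_pow_of_le_reesOrder hq hg))

theorem reesOrder_mul_le_rOrd [IsSLoc k d S] (D : Fin d → Derivation k S S) {N : ℕ}
    (hφ : ∀ j, φ (algebraMap S (BRing P) (zvar k d S j)) ∈ tId K ^ N) :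
    reesOrder (mS k d S) (elimAlg P D) * N ≤ rOrd P D φ := by
  obtain ⟨i, j, hj, -, heq⟩ := exists_reesOrder_elimAlg_eq P D
  have hfin : reesOrder (mS k d S) (elimAlg P D) ≠ ⊤ := by
    have hpos := sub_pos_of_le_b_sub_two P hj
    exact heq ▸ ENNReal.div_ne_top (ENNReal.natCast_ne_top _) (Nat.cast_ne_zero.mpr hpos.ne')
  lift reesOrder (mS k d S) (elimAlg P D) to ℝ≥0 using hfin with q hq
  have h := le_reesOrder tId_ne_top (contactAlg_le_slopeAlgebra hφ hq.le)
  exact_mod_cast h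

theorem map_zvar_mem_tId_pow_arcOrd (φ : BRing P →ₐ[k] K⟦X⟧) (j : Fin d) :
    φ (algebraMap S (BRing P) (zvar k d S j)) ∈ tId K ^ arcOrd P φ :=
  mem_pow_of_le_adicOrder (Nat.sInf_le (Or.inr ⟨j, rfl⟩))

theorem IsArc.arcOrd_ne_zero (hφ : IsArc P φ) : arcOrd P φ ≠ 0 := by
  obtain ⟨hm, hθ, hθ0, hz0⟩ := hφ
  refine Nat.one_le_iff_ne_zero.mp (le_csInf ⟨_, Or.inl ⟨⟨0, P.he⟩, rfl⟩⟩ ?_)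
  rintro _ (⟨i, rfl⟩ | ⟨j, rfl⟩)
  · exact (le_tOrd_iff (hθ0 i)).mpr (by simpa using hθ i)
  · exact (le_tOrd_iff (hz0 j)).mpr (by simpa using hm _ (zvar_mem_mS j))

theorem IsArc.arcOrd_eq (hφ : IsArc P φ) (hd : 1 ≤ d) {N : ℕ}
    (hN : ∀ j, (φ (algebraMap S (BRing P) (zvar k d S j))).order = N) : arcOrd P φ = N := by
  obtain ⟨-, -, hθ0, hz0⟩ := hφ
  have hz (j) : tOrd (φ (algebraMap S (BRing P) (zvar k d S j))) = N :=
    Nat.cast_injective ((order_eq_tOrd (hz0 j)).symm.trans (hN j))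
  refine IsLeast.csInf_eq ⟨Or.inr ⟨⟨0, hd⟩, hz _⟩, ?_⟩
  rintro _ (⟨i, rfl⟩ | ⟨j, rfl⟩)
  · have hθ := map_theta_mem_tId_pow_of_zvar (fun j => mem_tId_pow_iff.mpr (hN j).ge) i
    exact (le_tOrd_iff (hθ0 i)).mpr hθ
  · exact (hz j).ge

end Contact

section LinearArc

variable {σ k K : Type*} [Field k] [Field K] [Algebra k K]

/-- The arc `t ↦ t a` of affine space along the line through the origin with direction `a`. -/
def linearArc (a : σ → K) : MvPolynomial σ k →ₐ[k] K⟦X⟧ :=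
  MvPolynomial.aeval fun j => PowerSeries.C (a j) * PowerSeries.X

theorem linearArc_monomial (a : σ → K) (s : σ →₀ ℕ) (c : k) :
    linearArc a (MvPolynomial.monomial s c) =
      PowerSeries.C (MvPolynomial.aeval a (MvPolynomial.monomial s c)) *
        PowerSeries.X ^ s.degree := by
  simp only [linearArc, MvPolynomial.aeval_monomial, mul_pow, Finsupp.prod_mul, map_mul,
    PowerSeries.algebraMap_apply, mul_assoc]
  congr 2
  · simp [Finsupp.prod]
  · rw [Finsupp.prod, Finset.prod_pow_eq_pow_sum, Finsupp.degree_apply]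

theorem coeff_linearArc (a : σ → K) (p : MvPolynomial σ k) (n : ℕ) :
    PowerSeries.coeff n (linearArc a p) =
      MvPolynomial.aeval a (MvPolynomial.homogeneousComponent n p) := by
  induction p using MvPolynomial.induction_on' with
  | add p q hp hq => simp only [map_add, hp, hq]
  | monomial s c =>
    rw [linearArc_monomial, PowerSeries.coeff_C_mul_X_pow, MvPolynomial.homogeneousComponent_of_mem
      (MvPolynomial.isHomogeneous_monomial c rfl)]
    split_ifs <;> simp

theorem exists_homogeneousComponent_ne_zero {R : Type*} [CommRing R] {p : MvPolynomial σ R}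
    (hp : p ≠ 0) : ∃ n, MvPolynomial.homogeneousComponent n p ≠ 0 ∧
      p ∈ MvPolynomial.idealOfVars σ R ^ n := by
  classical
  have hex : ∃ n, MvPolynomial.homogeneousComponent n p ≠ 0 := by
    by_contra! h
    rw [← MvPolynomial.sum_homogeneousComponent p] at hp
    exact hp (Finset.sum_eq_zero (by simp [h]))
  refine ⟨Nat.find hex, Nat.find_spec hex, (MvPolynomial.mem_pow_idealOfVars_iff' _ _).mpr ?_⟩
  intro x hx
  have hcomp := congrArg (MvPolynomial.coeff x) (not_not.mp (Nat.find_min hex hx))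
  simpa [MvPolynomial.coeff_homogeneousComponent] using hcomp

theorem exists_forall_aeval_ne_zero [Infinite K] {T : Finset (MvPolynomial σ k)}
    (hT : ∀ F ∈ T, F ≠ 0) : ∃ a : σ → K, ∀ F ∈ T, MvPolynomial.aeval a F ≠ 0 := by
  by_contra! h
  have hprod : MvPolynomial.map (algebraMap k K) (∏ F ∈ T, F) = 0 := by
    refine MvPolynomial.funext fun a => ?_
    obtain ⟨F, hF, hFa⟩ := h a
    rw [MvPolynomial.eval_map, ← MvPolynomial.aeval_def, map_prod, map_zero]
    exact Finset.prod_eq_zero hF hFa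
  rw [map_eq_zero_iff _ (MvPolynomial.map_injective _ (algebraMap k K).injective),
    Finset.prod_eq_zero_iff] at hprod
  obtain ⟨F, hF, hF0⟩ := hprod
  exact hT F hF hF0

end LinearArc

section LineArc

variable {k : Type} [Field k] {d : ℕ} {S : Type} [CommRing S] [Algebra (MvPolynomial (Fin d) k) S]
variable [Algebra k S] [IsScalarTower k (MvPolynomial (Fin d) k) S] [IsSLoc k d S]
variable {K : Type*} [Field K] [Algebra k K]

theorem isUnit_linearArc (a : Fin d → K) (u : (mPoly k d).primeCompl) :
    IsUnit (linearArc a (u : MvPolynomial (Fin d) k)) := by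
  rw [PowerSeries.isUnit_iff_constantCoeff, isUnit_iff_ne_zero,
    ← PowerSeries.coeff_zero_eq_constantCoeff_apply, coeff_linearArc,
    MvPolynomial.homogeneousComponent_zero]
  have hu : (u : MvPolynomial (Fin d) k) ∉ mPoly k d := u.2
  simpa [mPoly, RingHom.mem_ker, MvPolynomial.aeval_zero', MvPolynomial.constantCoeff_eq] using hu

variable (k S) in
/-- The extension of `linearArc a` to the local ring `S` of affine space at the origin. -/
def lineArc (a : Fin d → K) : S →ₐ[k] K⟦X⟧ :=
  IsLocalization.liftAlgHom (isUnit_linearArc a)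

theorem lineArc_algebraMap (a : Fin d → K) (p : MvPolynomial (Fin d) k) :
    lineArc k S a (algebraMap _ S p) = linearArc a p :=
  IsLocalization.lift_eq _ p

theorem lineArc_zvar (a : Fin d → K) (j : Fin d) :
    lineArc k S a (zvar k d S j) = PowerSeries.C (a j) * PowerSeries.X := by
  rw [zvar, lineArc_algebraMap, linearArc, MvPolynomial.aeval_X]

theorem exists_initialForm [IsDomain S] {s : S} (hs : s ≠ 0) :
    ∃ F : MvPolynomial (Fin d) k, F ≠ 0 ∧ ∀ a : Fin d → K, MvPolynomial.aeval a F ≠ 0 →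
      (lineArc k S a s).order = adicOrder (mS k d S) s := by
  have := isNoetherianRing_of_isSLoc k d S
  obtain ⟨⟨p, u⟩, hpu⟩ := IsLocalization.surj (mPoly k d).primeCompl s
  have hu : IsUnit (algebraMap (MvPolynomial (Fin d) k) S u) := IsLocalization.map_units S u
  have hp : p ≠ 0 := by
    rintro rfl
    rw [map_zero, mul_eq_zero] at hpu
    exact hpu.elim hs hu.ne_zero
  obtain ⟨n, hF, hpn⟩ := exists_homogeneousComponent_ne_zero hp
  have hsn : s ∈ mS k d S ^ n := by
    have h := Ideal.mem_map_of_mem (algebraMap _ S) hpn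
    rwa [← mPoly_eq_idealOfVars, Ideal.map_pow, ← hpu, Ideal.mul_unit_mem_iff_mem _ hu] at h
  refine ⟨_, hF, fun a ha => le_antisymm ?_ ?_⟩
  · calc (lineArc k S a s).order
      _ ≤ (lineArc k S a s).order + (linearArc a (u : MvPolynomial (Fin d) k)).order := le_self_add
      _ = (linearArc a p).order := by
        rw [← PowerSeries.order_mul, ← lineArc_algebraMap (S := S), ← map_mul, hpu,
          lineArc_algebraMap]
      _ ≤ n := PowerSeries.order_le n (by rwa [coeff_linearArc])
      _ ≤ adicOrder (mS k d S) s := Nat.cast_le.mpr ((le_adicOrder_iff mS_ne_top hs).mpr hsn)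
  · have hz (j) : lineArc k S a (zvar k d S j) ∈ tId K := by
      rw [lineArc_zvar]
      exact Ideal.mul_mem_left _ _ (Ideal.mem_span_singleton_self _)
    exact mem_tId_pow_iff.mp (map_mem_pow (f := (lineArc k S a).toRingHom) hz
      (mem_pow_adicOrder _ s))

theorem exists_forall_order_lineArc_eq [IsDomain S] [Infinite K] {T : Finset S}
    (hT : ∀ s ∈ T, s ≠ 0) :
    ∃ a : Fin d → K, (∀ j, a j ≠ 0) ∧
      ∀ s ∈ T, (lineArc k S a s).order = adicOrder (mS k d S) s := by
  classical
  choose! F hF0 hF using fun s hs => exists_initialForm (k := k) (d := d) (K := K) (hT s hs)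
  obtain ⟨a, ha⟩ := exists_forall_aeval_ne_zero (K := K)
    (T := T.image F ∪ Finset.univ.image MvPolynomial.X)
    (by simpa [or_imp, forall_and, MvPolynomial.X_ne_zero] using hF0)
  refine ⟨a, fun j => ?_, fun s hs => hF s hs a (ha _ ?_)⟩
  · simpa using ha (MvPolynomial.X j) (by simp)
  · exact Finset.mem_union_left _ (Finset.mem_image_of_mem F hs)

end LineArc

section Expansion

variable {K W : Type*} [CommRing K] [CommRing W] [Algebra K W] {p w w' : W} {f g : K⟦X⟧}

/-- The power series `f` is an expansion of `w` in powers of `p`: the partial sums of `f p`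
converge to `w` in the `p`-adic topology. -/
def IsExpansion (p w : W) (f : K⟦X⟧) : Prop :=
  ∀ n, p ^ n ∣ w - aeval p (PowerSeries.trunc n f)

theorem pow_dvd_aeval {P : K[X]} {n : ℕ} (h : X ^ n ∣ P) : p ^ n ∣ aeval p P := by
  simpa using map_dvd (aeval p) h

theorem isExpansion_aeval (p : W) (P : K[X]) : IsExpansion p (aeval p P) (P : K⟦X⟧) := by
  intro n
  rw [← map_sub]
  refine pow_dvd_aeval (X_pow_dvd_iff.mpr fun l hl => ?_)
  simp [PowerSeries.coeff_trunc, hl]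

theorem IsExpansion.add (hf : IsExpansion p w f) (hg : IsExpansion p w' g) :
    IsExpansion p (w + w') (f + g) := by
  intro n
  rw [map_add, map_add, add_sub_add_comm]
  exact dvd_add (hf n) (hg n)

theorem IsExpansion.mul (hf : IsExpansion p w f) (hg : IsExpansion p w' g) :
    IsExpansion p (w * w') (f * g) := by
  intro n
  have htrunc : X ^ n ∣ PowerSeries.trunc n f * PowerSeries.trunc n g -
      PowerSeries.trunc n (f * g) := by
    refine X_pow_dvd_iff.mpr fun l hl => ?_
    rw [coeff_sub, PowerSeries.coeff_trunc, if_pos hl,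
      PowerSeries.coeff_mul_eq_coeff_trunc_mul_trunc f g hl, ← coeff_coe, coe_mul, sub_self]
  have hsplit : w * w' - aeval p (PowerSeries.trunc n (f * g)) =
      (w - aeval p (PowerSeries.trunc n f)) * w' +
        (aeval p (PowerSeries.trunc n f) * (w' - aeval p (PowerSeries.trunc n g)) +
          aeval p (PowerSeries.trunc n f * PowerSeries.trunc n g -
            PowerSeries.trunc n (f * g))) := by
    simp only [map_sub, map_mul]
    ring
  rw [hsplit]
  exact dvd_add ((hf n).mul_right _) (dvd_add ((hg n).mul_left _) (pow_dvd_aeval htrunc))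

theorem exists_isExpansion (hsurj : Function.Surjective (algebraMap K (W ⧸ Ideal.span {p})))
    (w : W) : ∃ f : K⟦X⟧, IsExpansion p w f := by
  have hdigit (w : W) : ∃ c q, w - algebraMap K W c = p * q := by
    obtain ⟨c, hc⟩ := hsurj (Ideal.Quotient.mk _ w)
    exact ⟨c, Ideal.mem_span_singleton.mp (Ideal.Quotient.eq.mp hc.symm)⟩
  choose c q hcq using hdigit
  suffices ∀ n, w - aeval p (PowerSeries.trunc n (.mk fun n => c (q^[n] w))) = p ^ n * q^[n] w from
    ⟨_, fun n => ⟨_, this n⟩⟩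
  intro n
  induction n with
  | zero => simp
  | succ n ih =>
    rw [PowerSeries.trunc_succ, map_add, ← sub_sub, ih, PowerSeries.coeff_mk, aeval_monomial,
      mul_comm _ (p ^ n), ← mul_sub, hcq, Function.iterate_succ_apply', pow_succ, mul_assoc]

theorem IsExpansion.unique (hp : p ∈ nonZeroDivisors W)
    (hinj : Function.Injective (algebraMap K (W ⧸ Ideal.span {p})))
    (hf : IsExpansion p w f) (hg : IsExpansion p w g) : f = g := by
  ext n
  induction n using Nat.strong_induction_on with
  | h n ih =>
    have htrunc : PowerSeries.trunc n f = PowerSeries.trunc n g := by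
      ext l
      rw [PowerSeries.coeff_trunc, PowerSeries.coeff_trunc]
      split_ifs with hl
      exacts [ih l hl, rfl]
    have hdvd : p ^ (n + 1) ∣ p ^ n * (algebraMap K W (PowerSeries.coeff n f) -
        algebraMap K W (PowerSeries.coeff n g)) := by
      convert dvd_sub (hg (n + 1)) (hf (n + 1)) using 1
      simp only [PowerSeries.trunc_succ, htrunc, map_add, aeval_monomial]
      ring
    refine hinj (Ideal.Quotient.eq.mpr (Ideal.mem_span_singleton.mpr ?_))
    exact (dvd_cancel_left_mem_nonZeroDivisors (pow_mem hp n)).mp (pow_succ p n ▸ hdvd)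

theorem exists_algHom_powerSeries (hp : p ∈ nonZeroDivisors W)
    (hbij : Function.Bijective (algebraMap K (W ⧸ Ideal.span {p}))) :
    ∃ h : W →ₐ[K] K⟦X⟧, h p = PowerSeries.X := by
  choose h hh using exists_isExpansion hbij.surjective
  have h_eq {w : W} {f : K⟦X⟧} (hf : IsExpansion p w f) : h w = f :=
    (hh w).unique hp hbij.injective hf
  refine ⟨{
    toFun := h
    map_zero' := h_eq (by simpa using isExpansion_aeval p (0 : K[X]))
    map_one' := h_eq (by simpa using isExpansion_aeval p (1 : K[X]))
    map_add' w w' := h_eq ((hh w).add (hh w'))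
    map_mul' w w' := h_eq ((hh w).mul (hh w'))
    commutes' c := h_eq (by simpa using isExpansion_aeval p (C c)) }, ?_⟩
  exact h_eq (by simpa using isExpansion_aeval p (X : K[X]))

end Expansion

section Parametrization

variable {K : Type*} [Field K]

theorem exists_injective_algHom_of_isDiscreteValuationRing {W : Type*} [CommRing W] [IsDomain W]
    [IsDiscreteValuationRing W] [Algebra K W]
    (hbij : Function.Bijective (algebraMap K (W ⧸ IsLocalRing.maximalIdeal W))) :
    ∃ h : W →ₐ[K] K⟦X⟧, Function.Injective h := by
  obtain ⟨p, hp⟩ := IsDiscreteValuationRing.exists_irreducible W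
  rw [hp.maximalIdeal_eq] at hbij
  obtain ⟨h, hhp⟩ := exists_algHom_powerSeries (mem_nonZeroDivisors_of_ne_zero hp.ne_zero) hbij
  refine ⟨h, (injective_iff_map_eq_zero h).mpr fun w hw => ?_⟩
  by_contra hw0
  obtain ⟨n, u, rfl⟩ := IsDiscreteValuationRing.eq_unit_mul_pow_irreducible hw0 hp
  rw [map_mul, map_pow, hhp] at hw
  exact mul_ne_zero (u.isUnit.map h).ne_zero (pow_ne_zero n PowerSeries.X_ne_zero) hw

variable [IsAlgClosed K] {C : Type*} [CommRing C] [Algebra K C] [Algebra K⟦X⟧ C]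
variable [IsScalarTower K K⟦X⟧ C] [Algebra.IsIntegral K⟦X⟧ C]

theorem algebraMap_quotient_bijective (M : Ideal C) [M.IsMaximal] :
    Function.Bijective (algebraMap K (C ⧸ M)) := by
  let m := IsLocalRing.maximalIdeal K⟦X⟧
  have : M.LiesOver m :=
    ⟨(IsLocalRing.eq_maximalIdeal (Ideal.isMaximal_comap_of_isIntegral_of_isMaximal M)).symm⟩
  have hsurj : Function.Surjective (algebraMap K (K⟦X⟧ ⧸ m)) := by
    intro x
    obtain ⟨f, rfl⟩ := Ideal.Quotient.mk_surjective x
    refine ⟨PowerSeries.constantCoeff f, Ideal.Quotient.eq.mpr ?_⟩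
    simp only [m, PowerSeries.maximalIdeal_eq_span_X, Ideal.mem_span_singleton,
      PowerSeries.X_dvd_iff]
    simp
  have : Algebra.IsIntegral K (K⟦X⟧ ⧸ m) :=
    Algebra.isIntegral_of_surjective hsurj
  have : Algebra.IsIntegral K (C ⧸ M) := Algebra.IsIntegral.trans (K⟦X⟧ ⧸ m)
  exact IsAlgClosed.algebraMap_bijective_of_isIntegral

theorem exists_injective_algHom_of_isDedekindDomain [IsDedekindDomain C]
    (hinj : Function.Injective (algebraMap K⟦X⟧ C)) :
    ∃ h : C →ₐ[K] K⟦X⟧, Function.Injective h := by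
  obtain ⟨M, hM⟩ := Ideal.exists_maximal C
  have hMb : M ≠ ⊥ := by
    rintro rfl
    have hbot := IsLocalRing.eq_maximalIdeal
      (Ideal.isMaximal_comap_of_isIntegral_of_isMaximal (R := K⟦X⟧) (⊥ : Ideal C))
    rw [← RingHom.ker_eq_comap_bot, (RingHom.injective_iff_ker_eq_bot _).mp hinj] at hbot
    exact IsDiscreteValuationRing.not_a_field _ hbot.symm
  let W := Localization.AtPrime M
  have : IsDiscreteValuationRing W :=
    IsLocalization.AtPrime.isDiscreteValuationRing_of_dedekind_domain C hMb W
  have hbij : Function.Bijective (algebraMap K (W ⧸ IsLocalRing.maximalIdeal W)) := by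
    have hresidue : Function.Bijective (algebraMap K (C ⧸ M)) := algebraMap_quotient_bijective M
    convert (IsLocalization.AtPrime.equivQuotMaximalIdeal M W).bijective.comp hresidue
    ext c
    exact (IsLocalization.AtPrime.equivQuotMaximalIdeal_apply_mk M W (algebraMap K C c)).symm
  obtain ⟨h, hh⟩ := exists_injective_algHom_of_isDiscreteValuationRing hbij
  exact ⟨h.comp (IsScalarTower.toAlgHom K C W),
    hh.comp (IsLocalization.injective W M.primeCompl_le_nonZeroDivisors)⟩

end Parametrization

section Endomorphism

variable {K : Type*} [Field K]

theorem constantCoeff_map_X_eq_zero (g : K⟦X⟧ →ₐ[K] K⟦X⟧) :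
    PowerSeries.constantCoeff (g PowerSeries.X) = 0 := by
  by_contra hc
  have hunit : IsUnit (PowerSeries.X - algebraMap K K⟦X⟧ (PowerSeries.constantCoeff (g .X))) := by
    rw [PowerSeries.isUnit_iff_constantCoeff]
    simpa using hc
  have hg := PowerSeries.isUnit_iff_constantCoeff.mp (hunit.map g)
  rw [map_sub, g.commutes] at hg
  simp at hg

theorem order_map_X_ne_zero (g : K⟦X⟧ →ₐ[K] K⟦X⟧) : (g PowerSeries.X).order ≠ 0 :=
  PowerSeries.order_ne_zero_iff_constCoeff_eq_zero.mpr (constantCoeff_map_X_eq_zero g)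

theorem order_map_eq_mul (g : K⟦X⟧ →ₐ[K] K⟦X⟧) (f : K⟦X⟧) :
    (g f).order = f.order * (g PowerSeries.X).order := by
  rcases eq_or_ne f 0 with rfl | hf
  · rw [map_zero, PowerSeries.order_zero, ENat.top_mul (order_map_X_ne_zero g)]
  conv_lhs => rw [← PowerSeries.X_pow_order_mul_divXPowOrder (f := f)]
  rw [map_mul, map_pow, PowerSeries.order_mul, PowerSeries.order_pow,
    PowerSeries.order_zero_of_unit ((PowerSeries.isUnit_divided_by_X_pow_order hf).map g),
    add_zero, nsmul_eq_mul, ENat.natCast_toNat (PowerSeries.order_eq_top.not.mpr hf)]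

end Endomorphism

section FiniteExtension

theorem exists_ringHom_comp_algebraMap_eq {S B Ω : Type*} [CommRing S] [CommRing B] [Algebra S B]
    [Algebra.IsIntegral S B] [FaithfulSMul S B] [Field Ω] [IsAlgClosed Ω] (f : S →+* Ω) :
    ∃ ψ : B →+* Ω, ψ.comp (algebraMap S B) = f := by
  have := RingHom.ker_isPrime f
  obtain ⟨Q, _, _⟩ := (inferInstance : Nonempty ((RingHom.ker f).primesOver B))
  let : Algebra (S ⧸ RingHom.ker f) Ω := (RingHom.kerLift f).toAlgebra
  have : Module.IsTorsionFree (S ⧸ RingHom.ker f) Ω :=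
    Module.isTorsionFree_iff_algebraMap_injective.mpr (RingHom.kerLift_injective f)
  have : Module.IsTorsionFree (S ⧸ RingHom.ker f) (B ⧸ Q) :=
    Module.isTorsionFree_iff_faithfulSMul.mpr inferInstance
  let ψ : B ⧸ Q →ₐ[S ⧸ RingHom.ker f] Ω := IsAlgClosed.lift
  refine ⟨ψ.toRingHom.comp (Ideal.Quotient.mk Q), RingHom.ext fun s => ?_⟩
  exact ψ.commutes (Ideal.Quotient.mk _ s)

variable {K : Type*} [Field K] [IsAlgClosed K] [CharZero K]

theorem exists_injective_algHom_of_finite {A : Type*} [CommRing A] [IsDomain A] [Algebra K A]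
    [Algebra K⟦X⟧ A] [IsScalarTower K K⟦X⟧ A] [Module.Finite K⟦X⟧ A] [FaithfulSMul K⟦X⟧ A] :
    ∃ h : A →ₐ[K] K⟦X⟧, Function.Injective h := by
  let F := FractionRing K⟦X⟧
  let L := FractionRing A
  let : Algebra F L := FractionRing.liftAlgebra K⟦X⟧ L
  have : IsScalarTower K⟦X⟧ F L := FractionRing.isScalarTower_liftAlgebra _ L
  have : CharZero F := charZero_of_injective_algebraMap (algebraMap K F).injective
  let C := integralClosure K⟦X⟧ L
  have : IsDedekindDomain C := integralClosure.isDedekindDomain K⟦X⟧ F L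
  obtain ⟨h, hh⟩ := exists_injective_algHom_of_isDedekindDomain (K := K) (C := C)
    (FaithfulSMul.algebraMap_injective K⟦X⟧ C)
  let ι : A →ₐ[K⟦X⟧] C := IsIntegralClosure.lift K⟦X⟧ C L
  refine ⟨h.comp (ι.restrictScalars K), hh.comp fun a b hab => ?_⟩
  refine FaithfulSMul.algebraMap_injective A L ?_
  simpa [ι] using congrArg (algebraMap C L) hab

open scoped TensorProduct in
theorem exists_ringHom_comp_algebraMap_eq_comp {S B : Type*} [CommRing S] [CommRing B]
    [Algebra S B] [Module.Finite S B] [FaithfulSMul S B] (f : S →+* K⟦X⟧) :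
    ∃ (ψ : B →+* K⟦X⟧) (g : K⟦X⟧ →ₐ[K] K⟦X⟧), Function.Injective g ∧
      ψ.comp (algebraMap S B) = (g : K⟦X⟧ →+* K⟦X⟧).comp f := by
  let Ω := AlgebraicClosure (FractionRing K⟦X⟧)
  let : Algebra S K⟦X⟧ := f.toAlgebra
  obtain ⟨ψ, hψ⟩ := exists_ringHom_comp_algebraMap_eq (B := B) (algebraMap S Ω)
  let ψS : B →ₐ[S] Ω := { ψ with commutes' := RingHom.congr_fun hψ }
  let Ψ : K⟦X⟧ ⊗[S] B →ₐ[K⟦X⟧] Ω :=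
    Algebra.TensorProduct.lift (Algebra.ofId K⟦X⟧ Ω) ψS fun _ _ => Commute.all _ _
  have : Module.Finite K⟦X⟧ Ψ.range :=
    .of_surjective Ψ.rangeRestrict.toLinearMap Ψ.rangeRestrict_surjective
  have hinj : Function.Injective (algebraMap K⟦X⟧ Ω) := by
    rw [IsScalarTower.algebraMap_eq K⟦X⟧ (FractionRing K⟦X⟧) Ω]
    exact (algebraMap (FractionRing K⟦X⟧) Ω).injective.comp (IsFractionRing.injective _ _)
  have : FaithfulSMul K⟦X⟧ Ψ.range :=
    (faithfulSMul_iff_algebraMap_injective _ _).mpr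
      (hinj.of_comp (f := Ψ.range.val) (g := algebraMap K⟦X⟧ Ψ.range))
  obtain ⟨h, hh⟩ := exists_injective_algHom_of_finite (K := K) (A := Ψ.range)
  let incl : B →ₐ[S] K⟦X⟧ ⊗[S] B := Algebra.TensorProduct.includeRight
  refine ⟨h.toRingHom.comp (Ψ.rangeRestrict.toRingHom.comp incl.toRingHom),
    h.comp (IsScalarTower.toAlgHom K K⟦X⟧ Ψ.range), ?_, ?_⟩
  · exact hh.comp (FaithfulSMul.algebraMap_injective K⟦X⟧ Ψ.range)
  · ext1 s
    have hs : incl (algebraMap S B s) = algebraMap K⟦X⟧ _ (f s) :=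
      (Algebra.TensorProduct.tmul_one_eq_one_tmul s).symm
    exact congrArg h ((congrArg Ψ.rangeRestrict hs).trans (Ψ.rangeRestrict.commutes _))

end FiniteExtension

section ArcLifting

variable {P : Presentation k d S} {K : Type} [Field K] [Algebra k K] {φ : BRing P →ₐ[k] K⟦X⟧}

theorem exists_algHom_order_eq_mul [IsAlgClosed K] [CharZero K] (P : Presentation k d S)
    (f : S →ₐ[k] K⟦X⟧) :
    ∃ (φ : BRing P →ₐ[k] K⟦X⟧) (e : ℕ), 1 ≤ e ∧ ∀ s,
      (φ (algebraMap S (BRing P) s)).order = (f s).order * e := by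
  have := P.hfinite
  have : FaithfulSMul S (BRing P) := (faithfulSMul_iff_algebraMap_injective _ _).mpr P.hinj
  obtain ⟨ψ, g, hg, hψ⟩ := exists_ringHom_comp_algebraMap_eq_comp (B := BRing P) (f : S →+* K⟦X⟧)
  have hψ (s) : ψ (algebraMap S (BRing P) s) = g (f s) := RingHom.congr_fun hψ s
  have hgX : g PowerSeries.X ≠ 0 := (map_ne_zero_iff g hg).mpr PowerSeries.X_ne_zero
  refine ⟨{ ψ with commutes' := fun c => ?_ }, tOrd (g PowerSeries.X), ?_, fun s => ?_⟩
  · exact (hψ (algebraMap k S c)).trans ((congrArg g (f.commutes c)).trans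
      ((g.restrictScalars k).commutes c))
  · have hone := Order.one_le_iff_pos.mpr (pos_iff_ne_zero.mpr (order_map_X_ne_zero g))
    rw [order_eq_tOrd hgX] at hone
    exact_mod_cast hone
  · rw [← order_eq_tOrd hgX, ← order_map_eq_mul, ← hψ]
    rfl

theorem isArc_of_order_zvar_eq {e : ℕ} (he : 1 ≤ e)
    (hz : ∀ j, (φ (algebraMap S (BRing P) (zvar k d S j))).order = e)
    (hB : ∀ i, φ (algebraMap S (BRing P) (P.Bc i 0)) ≠ 0) : IsArc P φ := by
  have hmem (j) : φ (algebraMap S (BRing P) (zvar k d S j)) ∈ tId K ^ 1 :=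
    mem_tId_pow_iff.mpr (by rw [hz]; exact_mod_cast he)
  refine ⟨fun s hs => ?_, fun i => ?_, fun i => map_theta_ne_zero (hB i), fun j hj => ?_⟩
  · have hφs := map_mem_pow (f := (φ : BRing P →+* K⟦X⟧).comp (algebraMap S (BRing P)))
      (n := 1) hmem (by simpa using hs)
    simpa using hφs
  · simpa using map_theta_mem_tId_pow_of_zvar hmem i
  · simpa [hj] using hz j

theorem rOrd_le_of_order_eq_mul (D : Fin d → Derivation k S S) {i : Fin P.e} {j e : ℕ}
    (hj : j ≤ P.b i - 2)
    (h : (φ (algebraMap S (BRing P) (P.Bc i j))).order = adicOrder (mS k d S) (P.Bc i j) * e) :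
    rOrd P D φ ≤ adicOrder (mS k d S) (P.Bc i j) / (P.b i - j : ℕ) * e := by
  have h0 : φ (algebraMap S (BRing P) (P.Bc i j)) ≠ 0 :=
    ne_zero_of_order_eq_natCast (h.trans (Nat.cast_mul _ _).symm)
  have htOrd : tOrd (φ (algebraMap S (BRing P) (P.Bc i j))) =
      adicOrder (mS k d S) (P.Bc i j) * e := by
    rw [order_eq_tOrd h0] at h
    exact_mod_cast h
  refine sInf_le ⟨_, P.b i - j, h0, sub_pos_of_le_b_sub_two P hj, Algebra.subset_adjoin
    (Or.inr ⟨_, _, C_mul_X_pow_mem_elimAlg P D hj, h0, rfl⟩), ?_⟩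
  rw [← tOrd, htOrd, Nat.cast_mul, ENNReal.mul_div_right_comm]

theorem exists_isArc_rOrd_eq [IsScalarTower k (MvPolynomial (Fin d) k) S] [IsSLoc k d S]
    [IsAlgClosed K] [CharZero K] (hd : 1 ≤ d) (P : Presentation k d S)
    (D : Fin d → Derivation k S S) :
    ∃ φ : BRing P →ₐ[k] K⟦X⟧, IsArc P φ ∧
      rOrd P D φ = reesOrder (mS k d S) (elimAlg P D) * arcOrd P φ := by
  classical
  obtain ⟨i, j, hj, hne, hord⟩ := exists_reesOrder_elimAlg_eq P D
  obtain ⟨a, ha0, ha⟩ := exists_forall_order_lineArc_eq (k := k) (d := d) (K := K)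
    (T := insert (P.Bc i j) (Finset.univ.image fun i => P.Bc i 0))
    (by simp [hne, Bc_zero_ne_zero P])
  simp only [Finset.mem_insert, Finset.mem_image, Finset.mem_univ, true_and, forall_eq_or_imp,
    forall_exists_index, forall_apply_eq_imp_iff] at ha
  obtain ⟨φ, e, he, hφ⟩ := exists_algHom_order_eq_mul P (lineArc k S a)
  have hz (j) : (φ (algebraMap S (BRing P) (zvar k d S j))).order = e := by
    rw [hφ, lineArc_zvar, PowerSeries.order_mul, PowerSeries.order_X,
      PowerSeries.order_zero_of_unit ((ha0 j).isUnit.map _), zero_add, one_mul]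
  have harc : IsArc P φ := isArc_of_order_zvar_eq he hz fun i => by
    refine ne_zero_of_order_eq_natCast (n := adicOrder (mS k d S) (P.Bc i 0) * e) ?_
    rw [hφ, ha.2, Nat.cast_mul]
  refine ⟨φ, harc, ?_⟩
  rw [harc.arcOrd_eq hd hz]
  refine le_antisymm (hord ▸ rOrd_le_of_order_eq_mul D hj ?_)
    (reesOrder_mul_le_rOrd D fun j => mem_tId_pow_iff.mpr (hz j).ge)
  rw [hφ, ha.1]

end ArcLifting

/-- **Main Theorem** (Theorem `thm:main_order-r` / `thm:main`).
Let `X = Spec B` be given by a local presentation attached to the multiplicity, with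
elimination algebra `G_X^{(d)}` over `S` and closed point `ξ`.  Then
`ord_ξ(G_X^{(d)})` equals the minimum, over all field extensions `K ⊇ k` and all arcs
`φ : B → K⟦t⟧` in `X` through `ξ`, of `r_{X,φ} / ord(φ)`.  In particular
`r_{X,φ}/ord(φ) ≥ ord(G_X^{(d)})` for every such arc, and some arc attains the value,
so the infimum is a minimum. -/
theorem main_theorem_order_eq_min_normalized_contact_order
    (k : Type) [Field k] [CharZero k] (d : ℕ) (hd : 1 ≤ d)
    (S : Type) [CommRing S] [IsDomain S] [Algebra (MvPolynomial (Fin d) k) S]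
    [Algebra k S] [IsScalarTower k (MvPolynomial (Fin d) k) S] [IsSLoc k d S]
    (D : Fin d → Derivation k S S)
    (hD : ∀ i j : Fin d, D j (zvar k d S i) = if i = j then 1 else 0)
    (P : Presentation k d S) :
    IsLeast
      {q : ℝ≥0∞ | ∃ (K : Type) (_ : Field K) (_ : Algebra k K)
        (φ : BRing P →ₐ[k] PowerSeries K), IsArc P φ ∧
        q = rOrd P D φ / (arcOrd P φ : ℝ≥0∞)}
      (reesOrder (mS k d S) (elimAlg P D)) := by
  have := charZero_of_injective_algebraMap (algebraMap k (AlgebraicClosure k)).injective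
  constructor
  · obtain ⟨φ, hφ, hr⟩ := exists_isArc_rOrd_eq (K := AlgebraicClosure k) hd P D
    have hpos : (arcOrd P φ : ℝ≥0∞) ≠ 0 := Nat.cast_ne_zero.mpr hφ.arcOrd_ne_zero
    refine ⟨AlgebraicClosure k, inferInstance, inferInstance, φ, hφ, ?_⟩
    rw [hr, ENNReal.mul_div_cancel_right hpos (ENNReal.natCast_ne_top _)]
  · rintro _ ⟨K, _, _, φ, hφ, rfl⟩
    have hpos : (arcOrd P φ : ℝ≥0∞) ≠ 0 := Nat.cast_ne_zero.mpr hφ.arcOrd_ne_zero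
    rw [ENNReal.le_div_iff_mul_le (.inl hpos) (.inl (ENNReal.natCast_ne_top _))]
    exact reesOrder_mul_le_rOrd D (map_zvar_mem_tId_pow_arcOrd φ)

end NashMult
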